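/- arXiv:2401.02904 — 3 statements merged into one kernel-verified Lean document; each statement's English description precedes it below -/
import Mathlib

section
/- Assume the loss ℓ(w,x,y) takes values in [0,1]. Then the super-sample class-generalization error of class y satisfies |gen_y| ≤ E_{Z_{[2n]}}[(1/n^y) Σ_{i=1}^n sqrt(2·max(𝟙{Y_i^-=y}, 𝟙{Y_i^+=y})·I_{Z_{[2n]}}(W;U_i))]. -/
open MeasureTheory ProbabilityTheory
open scoped ENNReal

noncomputable section

open Classical in
/-- Kullback–Leibler divergence: `∞` unless `μ ≪ ν` and the log-likelihood ratio is
`μ`-integrable. -/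
def KL {α : Type*} [MeasurableSpace α] (μ ν : Measure α) : ℝ≥0∞ :=
  if μ ≪ ν ∧ Integrable (llr μ ν) μ then ENNReal.ofReal (∫ x, llr μ ν x ∂μ) else ∞

/-- Fair coin measure on `Bool` (the law of a uniform `{−1,+1}` selector, `true ↔ +1`). -/
def coin : Measure Bool :=
  (2 : ℝ≥0∞)⁻¹ • Measure.dirac true + (2 : ℝ≥0∞)⁻¹ • Measure.dirac false

/-- Disintegrated conditional mutual information `I_z(A;B)` given `Z = z`, defined through
regular conditional distributions: `KL(P_{A,B|Z=z} ‖ P_{A|Z=z} ⊗ P_{B|Z=z})`. -/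
def dCMI {Ω γ α β : Type*} [MeasurableSpace Ω] [MeasurableSpace γ]
    [MeasurableSpace α] [StandardBorelSpace α] [Nonempty α]
    [MeasurableSpace β] [StandardBorelSpace β] [Nonempty β]
    (μ : Measure Ω) [IsFiniteMeasure μ]
    (A : Ω → α) (B : Ω → β) (Z : Ω → γ) (z : γ) : ℝ≥0∞ :=
  KL (condDistrib (fun ω => (A ω, B ω)) Z μ z)
    ((condDistrib A Z μ z).prod (condDistrib B Z μ z))

/-- The super-sample entry selected by `u`, i.e. `z^{u}` (the training sample):
`zz = (z⁻, z⁺)` and `u = true` means `+1`. -/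
def trainSel {𝒵 : Type*} (zz : 𝒵 × 𝒵) (u : Bool) : 𝒵 := if u then zz.2 else zz.1

/-- The super-sample entry not selected by `u`, i.e. `z^{−u}` (the test sample). -/
def testSel {𝒵 : Type*} (zz : 𝒵 × 𝒵) (u : Bool) : 𝒵 := if u then zz.1 else zz.2

/-! Conditionally on the super-sample `z`, the selector `U i` is still a fair coin, and flipping it
exchanges the training and the test sample of the `i`-th pair. The test-minus-train gap of the class
loss is therefore odd in `U i`, so it has mean zero under the product `P_{W|z} ⊗ coin` whatever the
law of `W` is, and Hoeffding's lemma makes it sub-Gaussian there, with variance proxy the squared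
bound on the gap. This bound vanishes unless one of the two samples of the pair has label `y`.
The Donsker–Varadhan inequality, optimised over the scaling of the gap, then controls its mean under
the joint law `P_{W,U i|z}` by the square root of the disintegrated mutual information; averaging
over `z` concludes. -/

open scoped NNReal

section Transport

variable {α : Type*} [MeasurableSpace α] {P Q : Measure α} {f : α → ℝ}

lemma integral_le_integral_llr_add_log_integral_exp [IsProbabilityMeasure P] [SigmaFinite Q]
    (hPQ : P ≪ Q) (hllr : Integrable (llr P Q) P) (hf : Integrable f P)
    (hexp : Integrable (fun x ↦ Real.exp (f x)) Q) :
    ∫ x, f x ∂P ≤ ∫ x, llr P Q x ∂P + Real.log (∫ x, Real.exp (f x) ∂Q) := by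
  have : NeZero Q := ⟨fun hQ ↦ IsProbabilityMeasure.ne_zero P <|
    Measure.absolutelyContinuous_zero_iff.1 (hQ ▸ hPQ)⟩
  have := isProbabilityMeasure_tilted hexp
  have gibbs := InformationTheory.integral_llr_add_sub_measure_univ_nonneg
    (hPQ.trans (absolutelyContinuous_tilted hexp)) (integrable_llr_tilted_right hPQ hf hllr hexp)
  simp only [integral_llr_tilted_right hPQ hf hexp hllr, probReal_univ] at gibbs
  linarith

lemma sq_integral_le_of_hasSubgaussianMGF [IsProbabilityMeasure P] [SigmaFinite Q] {c : ℝ≥0}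
    (hPQ : P ≪ Q) (hllr : Integrable (llr P Q) P) (hf : Integrable f P)
    (hsub : HasSubgaussianMGF f c Q) :
    (∫ x, f x ∂P) ^ 2 ≤ 2 * c * ∫ x, llr P Q x ∂P := by
  have scaled (t : ℝ) :
      0 ≤ (c / 2 : ℝ) * (t * t) + -(∫ x, f x ∂P) * t + ∫ x, llr P Q x ∂P := by
    have hDV := integral_le_integral_llr_add_log_integral_exp hPQ hllr (hf.const_mul t)
      (hsub.integrable_exp_mul t)
    rw [integral_const_mul] at hDV
    have hcgf : Real.log (∫ x, Real.exp (t * f x) ∂Q) ≤ c * t ^ 2 / 2 := hsub.cgf_le t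
    linarith
  have hdiscrim := discrim_le_zero scaled
  rw [discrim] at hdiscrim
  linarith

lemma enorm_integral_le_of_hasSubgaussianMGF [IsProbabilityMeasure P] [SigmaFinite Q] {c : ℝ≥0}
    (hc : c ≠ 0) (hf : Integrable f P) (hsub : HasSubgaussianMGF f c Q) :
    ‖∫ x, f x ∂P‖ₑ ≤ (2 * c * KL P Q) ^ (1 / 2 : ℝ) := by
  rw [KL]
  split_ifs with h
  · have hsq := sq_integral_le_of_hasSubgaussianMGF h.1 h.2 hf hsub
    rw [Real.enorm_eq_ofReal_abs, show (2 * c : ℝ≥0∞) = ENNReal.ofReal (2 * c) by simp,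
      ← ENNReal.ofReal_mul (by positivity),
      ENNReal.ofReal_rpow_of_nonneg ((sq_nonneg _).trans hsq) (by norm_num), ← Real.sqrt_eq_rpow]
    exact ENNReal.ofReal_le_ofReal (Real.abs_le_sqrt hsq)
  · simp [ENNReal.mul_top, hc]

lemma hasSubgaussianMGF_of_comp_eq_neg [IsProbabilityMeasure Q] {T : α → α}
    (hT : MeasurePreserving T Q Q) (hf : AEMeasurable f Q) (hodd : ∀ x, f (T x) = -f x) {b : ℝ≥0}
    (hb : ∀ᵐ x ∂Q, |f x| ≤ b) :
    HasSubgaussianMGF f (b ^ 2) Q := by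
  have mean_zero : ∫ x, f x ∂Q = 0 := by
    rw [← self_eq_neg]
    calc ∫ x, f x ∂Q = ∫ x, f (T x) ∂Q := by
          conv_lhs => rw [← hT.map_eq]
          exact integral_map hT.aemeasurable (hT.map_eq.symm ▸ hf.aestronglyMeasurable)
      _ = -∫ x, f x ∂Q := by simp only [hodd, integral_neg]
  have hoeffding := hasSubgaussianMGF_of_mem_Icc_of_integral_eq_zero hf
    (hb.mono fun x hx ↦ abs_le.1 hx) mean_zero
  have half_width : ‖(b : ℝ) - -b‖₊ / 2 = b := by
    rw [sub_neg_eq_add, ← two_mul, nnnorm_mul, Real.nnnorm_ofNat, NNReal.nnnorm_eq]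
    exact mul_div_cancel_left₀ b two_ne_zero
  rwa [half_width] at hoeffding

end Transport

section Coin

instance isProbabilityMeasure_coin : IsProbabilityMeasure coin :=
  ⟨by simp [coin, ENNReal.inv_two_add_inv_two]⟩

lemma measurePreserving_not_coin : MeasurePreserving not coin coin where
  measurable := measurable_from_top
  map_eq := by
    rw [coin, Measure.map_add _ _ measurable_from_top, Measure.map_smul, Measure.map_smul,
      Measure.map_dirac' measurable_from_top, Measure.map_dirac' measurable_from_top,
      Bool.not_true, Bool.not_false, add_comm]

variable {α : Type*} [MeasurableSpace α] {f : α × Bool → ℝ} {b : ℝ≥0}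

lemma hasSubgaussianMGF_prod_coin (ρ : Measure α) [IsProbabilityMeasure ρ] (hf : Measurable f)
    (hodd : ∀ a u, f (a, !u) = -f (a, u)) (hb : ∀ p, |f p| ≤ b) :
    HasSubgaussianMGF f (b ^ 2) (ρ.prod coin) :=
  hasSubgaussianMGF_of_comp_eq_neg ((MeasurePreserving.id ρ).prod measurePreserving_not_coin)
    hf.aemeasurable (fun p ↦ hodd p.1 p.2) (.of_forall hb)

lemma enorm_integral_le_KL_prod_coin (P : Measure (α × Bool)) [IsProbabilityMeasure P]
    (ρ : Measure α) [IsProbabilityMeasure ρ] (hf : Measurable f)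
    (hodd : ∀ a u, f (a, !u) = -f (a, u)) (hb : ∀ p, |f p| ≤ b) :
    ‖∫ p, f p ∂P‖ₑ ≤ (2 * b ^ 2 * KL P (ρ.prod coin)) ^ (1 / 2 : ℝ) := by
  rcases eq_or_ne b 0 with rfl | hb0
  · have hf0 (p : α × Bool) : f p = 0 := by simpa using hb p
    simp [hf0]
  · have hint : Integrable f P := .of_bound hf.aestronglyMeasurable b (.of_forall hb)
    exact_mod_cast enorm_integral_le_of_hasSubgaussianMGF (pow_ne_zero 2 hb0) hint
      (hasSubgaussianMGF_prod_coin ρ hf hodd hb)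

end Coin

lemma map_prodMk_eval_eq_prod {Ω γ ι : Type*} {β : ι → Type*} [MeasurableSpace Ω]
    [MeasurableSpace γ] [∀ i, MeasurableSpace (β i)] [Fintype ι] {μ : Measure Ω} {ν : Measure γ}
    [SFinite ν] {η : ∀ i, Measure (β i)} [∀ i, IsProbabilityMeasure (η i)]
    {Z : Ω → γ} (hZ : Measurable Z) {X : Ω → ∀ i, β i} (hX : Measurable X)
    (hlaw : μ.map (fun ω ↦ (Z ω, X ω)) = ν.prod (Measure.pi η)) (i : ι) :
    μ.map (fun ω ↦ (Z ω, X ω i)) = (μ.map Z).prod (η i) := by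
  have hZlaw : μ.map Z = ν := by
    rw [← Measure.fst_map_prodMk hX, hlaw, Measure.fst_prod]
  have hpush := congrArg (Measure.map (Prod.map id (Function.eval i))) hlaw
  rwa [Measure.map_map (by fun_prop) (hZ.prodMk hX),
    ← Measure.map_prod_map _ _ measurable_id (measurable_pi_apply i), Measure.map_id,
    (measurePreserving_eval η i).map_eq, ← hZlaw] at hpush

section Disintegration

variable {Ω γ β : Type*} [MeasurableSpace Ω] [MeasurableSpace γ]
  [MeasurableSpace β] [StandardBorelSpace β] [Nonempty β]
  {μ : Measure Ω} [IsFiniteMeasure μ] {Z : Ω → γ}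

lemma integral_comp_prodMk_eq_integral_condDistrib {E : Type*} [NormedAddCommGroup E]
    [NormedSpace ℝ E] {X : Ω → β} {f : γ × β → E} (hZ : AEMeasurable Z μ)
    (hX : AEMeasurable X μ) (hf : Integrable f (μ.map fun ω ↦ (Z ω, X ω))) :
    ∫ ω, f (Z ω, X ω) ∂μ = ∫ z, ∫ x, f (z, x) ∂condDistrib X Z μ z ∂(μ.map Z) := by
  rw [← integral_map (hZ.prodMk hX) hf.aestronglyMeasurable]
  rw [← compProd_map_condDistrib hX] at hf ⊢
  exact Measure.integral_compProd hf

lemma condDistrib_ae_eq_const {X : Ω → β} {ν : Measure β} [IsFiniteMeasure ν]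
    (hX : AEMeasurable X μ) (hlaw : μ.map (fun ω ↦ (Z ω, X ω)) = (μ.map Z).prod ν) :
    ∀ᵐ z ∂(μ.map Z), condDistrib X Z μ z = ν := by
  refine condDistrib_ae_eq_of_measure_eq_compProd Z hX (κ := Kernel.const γ ν) ?_
  rw [hlaw, Measure.compProd_const]

end Disintegration

section ConditionalMutualInformation

variable {Ω γ 𝒲 : Type*} [MeasurableSpace Ω] [MeasurableSpace γ]
  [MeasurableSpace 𝒲] [StandardBorelSpace 𝒲] [Nonempty 𝒲]
  {μ : Measure Ω} [IsFiniteMeasure μ] {Z : Ω → γ} {W : Ω → 𝒲}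

lemma enorm_integral_condDistrib_le_dCMI {U : Ω → Bool} {z : γ} {f : 𝒲 × Bool → ℝ} {b : ℝ≥0}
    (hcoin : condDistrib U Z μ z = coin) (hf : Measurable f)
    (hodd : ∀ w u, f (w, !u) = -f (w, u)) (hb : ∀ p, |f p| ≤ b) :
    ‖∫ p, f p ∂condDistrib (fun ω ↦ (W ω, U ω)) Z μ z‖ₑ
      ≤ (2 * b ^ 2 * dCMI μ W U Z z) ^ (1 / 2 : ℝ) := by
  rw [dCMI, hcoin]
  exact enorm_integral_le_KL_prod_coin _ _ hf hodd hb

theorem enorm_integral_sum_le_lintegral_sum_dCMI {ι : Type*} [Fintype ι] {U : ι → Ω → Bool}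
    (hZ : AEMeasurable Z μ) (hW : AEMeasurable W μ) (hU : ∀ i, AEMeasurable (U i) μ)
    (hcoin : ∀ i, μ.map (fun ω ↦ (Z ω, U i ω)) = (μ.map Z).prod coin)
    {f : ι → γ × (𝒲 × Bool) → ℝ} {b : ι → γ → ℝ≥0} (hf : ∀ i, Measurable (f i))
    (hint : ∀ i, Integrable (f i) (μ.map fun ω ↦ (Z ω, (W ω, U i ω))))
    (hodd : ∀ i z w u, f i (z, (w, !u)) = -f i (z, (w, u)))
    (hb : ∀ i z p, |f i (z, p)| ≤ b i z) :
    ‖∫ ω, ∑ i, f i (Z ω, (W ω, U i ω)) ∂μ‖ₑ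
      ≤ ∫⁻ z, ∑ i, (2 * b i z ^ 2 * dCMI μ W (U i) Z z) ^ (1 / 2 : ℝ) ∂(μ.map Z) := by
  have hWU (i : ι) : AEMeasurable (fun ω ↦ (W ω, U i ω)) μ := hW.prodMk (hU i)
  let condMean (i : ι) (z : γ) : ℝ :=
    ∫ p, f i (z, p) ∂condDistrib (fun ω ↦ (W ω, U i ω)) Z μ z
  have condMean_integrable (i : ι) : Integrable (condMean i) (μ.map Z) :=
    (hint i).integral_condDistrib_map (hWU i)
  have f_integrable (i : ι) : Integrable (fun ω ↦ f i (Z ω, (W ω, U i ω))) μ :=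
    (hint i).comp_aemeasurable (hZ.prodMk (hWU i))
  have tower : ∫ ω, ∑ i, f i (Z ω, (W ω, U i ω)) ∂μ = ∫ z, ∑ i, condMean i z ∂(μ.map Z) := by
    rw [integral_finsetSum _ fun i _ ↦ f_integrable i,
      integral_finsetSum _ fun i _ ↦ condMean_integrable i]
    exact Finset.sum_congr rfl fun i _ ↦
      integral_comp_prodMk_eq_integral_condDistrib hZ (hWU i) (hint i)
  have hcond : ∀ᵐ z ∂(μ.map Z), ∀ i, condDistrib (U i) Z μ z = coin :=
    ae_all_iff.2 fun i ↦ condDistrib_ae_eq_const (hU i) (hcoin i)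
  rw [tower]
  refine (enorm_integral_le_lintegral_enorm _).trans (lintegral_mono_ae ?_)
  filter_upwards [hcond] with z hz
  exact (enorm_sum_le _ _).trans <| Finset.sum_le_sum fun i _ ↦
    enorm_integral_condDistrib_le_dCMI (hz i) ((hf i).comp measurable_prodMk_left)
      (hodd i z) (hb i z)

end ConditionalMutualInformation

section SelectionGap

variable {𝒵 : Type*}

/-- The test-minus-train difference of `f` on a pair of the super-sample, when the selector `u`
picks the training sample. -/
def selGap (f : 𝒵 → ℝ) (zz : 𝒵 × 𝒵) (u : Bool) : ℝ := f (testSel zz u) - f (trainSel zz u)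

lemma selGap_not (f : 𝒵 → ℝ) (zz : 𝒵 × 𝒵) (u : Bool) : selGap f zz (!u) = -selGap f zz u := by
  cases u <;> simp [selGap, testSel, trainSel]

lemma abs_selGap_le {f : 𝒵 → ℝ} {b : 𝒵 → ℝ≥0} (hf : ∀ p, f p ∈ Set.Icc 0 (b p : ℝ))
    (zz : 𝒵 × 𝒵) (u : Bool) : |selGap f zz u| ≤ max (b zz.1) (b zz.2) := by
  have hsub (p q : 𝒵) : |f p - f q| ≤ max (b p) (b q) :=
    abs_sub_le_of_nonneg_of_le (hf p).1 ((hf p).2.trans (le_max_left _ _))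
      (hf q).1 ((hf q).2.trans (le_max_right _ _))
  cases u
  · exact (hsub zz.2 zz.1).trans_eq (max_comm _ _)
  · exact hsub zz.1 zz.2

lemma measurable_selGap {α δ : Type*} [MeasurableSpace α] [MeasurableSpace δ] [MeasurableSpace 𝒵]
    {f : α → 𝒵 → ℝ} (hf : Measurable fun p : α × 𝒵 ↦ f p.1 p.2) {a : δ → α} (ha : Measurable a)
    {zz : δ → 𝒵 × 𝒵} (hzz : Measurable zz) {u : δ → Bool} (hu : Measurable u) :
    Measurable fun d ↦ selGap (f (a d)) (zz d) (u d) := by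
  have hu_true : MeasurableSet {d | u d = true} := hu (measurableSet_singleton true)
  have htest : Measurable fun d ↦ testSel (zz d) (u d) := .ite hu_true hzz.fst hzz.snd
  have htrain : Measurable fun d ↦ trainSel (zz d) (u d) := .ite hu_true hzz.snd hzz.fst
  exact (hf.comp (ha.prodMk htest)).sub (hf.comp (ha.prodMk htrain))

end SelectionGap

section ClassLoss

variable {𝒲 𝒳 𝒴 : Type*} [DecidableEq 𝒴]

/-- The indicator `𝟙{Y = y}` of class `y`, as a function of the sample `(X, Y)`. -/
def classIndicator (y : 𝒴) (p : 𝒳 × 𝒴) : ℝ≥0 := if p.2 = y then 1 else 0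

/-- The loss charged to class `y`: `𝟙{Y = y}·ℓ(w, X, Y)`, as a function of the sample `(X, Y)`. -/
def classLoss (ℓ : 𝒲 → 𝒳 → 𝒴 → ℝ) (y : 𝒴) (w : 𝒲) (p : 𝒳 × 𝒴) : ℝ :=
  if p.2 = y then ℓ w p.1 p.2 else 0

lemma classIndicator_le_one (y : 𝒴) (p : 𝒳 × 𝒴) : classIndicator y p ≤ 1 := by
  unfold classIndicator
  split_ifs <;> simp

lemma coe_max_classIndicator_sq (y : 𝒴) (p q : 𝒳 × 𝒴) :
    ((max (classIndicator y p) (classIndicator y q) : ℝ≥0) : ℝ≥0∞) ^ 2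
      = max (if p.2 = y then 1 else 0) (if q.2 = y then 1 else 0) := by
  unfold classIndicator
  split_ifs <;> simp

lemma classLoss_mem_Icc {ℓ : 𝒲 → 𝒳 → 𝒴 → ℝ} (hℓ01 : ∀ w x y', ℓ w x y' ∈ Set.Icc (0 : ℝ) 1)
    (y : 𝒴) (w : 𝒲) (p : 𝒳 × 𝒴) :
    classLoss ℓ y w p ∈ Set.Icc 0 (classIndicator y p : ℝ) := by
  unfold classLoss classIndicator
  split_ifs
  · exact hℓ01 _ _ _
  · simp

lemma measurable_classLoss [MeasurableSpace 𝒲] [MeasurableSpace 𝒳] [MeasurableSpace 𝒴]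
    {ℓ : 𝒲 → 𝒳 → 𝒴 → ℝ} (hℓ : Measurable fun p : 𝒲 × 𝒳 × 𝒴 ↦ ℓ p.1 p.2.1 p.2.2)
    {y : 𝒴} (hy : MeasurableSet {y}) :
    Measurable fun p : 𝒲 × 𝒳 × 𝒴 ↦ classLoss ℓ y p.1 p.2 :=
  Measurable.ite (measurable_snd.snd hy) hℓ measurable_const

end ClassLoss

theorem class_CMI_bound_general
    {Ω ι 𝒲 𝒳 𝒴 : Type*} [Fintype ι]
    [MeasurableSpace Ω]
    [MeasurableSpace 𝒲] [StandardBorelSpace 𝒲] [Nonempty 𝒲]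
    [MeasurableSpace 𝒳] [MeasurableSpace 𝒴] [DecidableEq 𝒴]
    {μ : Measure Ω} [IsFiniteMeasure μ]
    {Z : Ω → ι → (𝒳 × 𝒴) × (𝒳 × 𝒴)} (hZ : AEMeasurable Z μ)
    {U : Ω → ι → Bool} (hU : AEMeasurable U μ)
    {W : Ω → 𝒲} (hW : AEMeasurable W μ)
    (hcoin : ∀ i, μ.map (fun ω ↦ (Z ω, U ω i)) = (μ.map Z).prod coin)
    {ℓ : 𝒲 → 𝒳 → 𝒴 → ℝ} (hℓ : Measurable fun p : 𝒲 × 𝒳 × 𝒴 ↦ ℓ p.1 p.2.1 p.2.2)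
    (hℓ01 : ∀ w x y', ℓ w x y' ∈ Set.Icc (0 : ℝ) 1)
    {y : 𝒴} (hy : MeasurableSet {y}) {c : ℝ} (hc : 0 ≤ c) :
    ENNReal.ofReal |∫ ω, c * ∑ i, selGap (classLoss ℓ y (W ω)) (Z ω i) (U ω i) ∂μ|
      ≤ ∫⁻ z, ENNReal.ofReal c *
            ∑ i, (2 * max (if (z i).1.2 = y then (1 : ℝ≥0∞) else 0)
                          (if (z i).2.2 = y then (1 : ℝ≥0∞) else 0) *
                  dCMI μ W (fun ω ↦ U ω i) Z z) ^ (1 / 2 : ℝ)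
          ∂(μ.map Z) := by
  let gap (i : ι) (q : (ι → (𝒳 × 𝒴) × (𝒳 × 𝒴)) × (𝒲 × Bool)) : ℝ :=
    selGap (classLoss ℓ y q.2.1) (q.1 i) q.2.2
  let bound (i : ι) (z : ι → (𝒳 × 𝒴) × (𝒳 × 𝒴)) : ℝ≥0 :=
    max (classIndicator y (z i).1) (classIndicator y (z i).2)
  have gap_measurable (i : ι) : Measurable (gap i) :=
    measurable_selGap (measurable_classLoss hℓ hy) (by fun_prop) (by fun_prop) (by fun_prop)
  have gap_le (i : ι) (z : ι → (𝒳 × 𝒴) × (𝒳 × 𝒴)) (p : 𝒲 × Bool) : |gap i (z, p)| ≤ bound i z :=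
    mod_cast abs_selGap_le (classLoss_mem_Icc hℓ01 y p.1) (z i) p.2
  have bound_le_one (i : ι) (z : ι → (𝒳 × 𝒴) × (𝒳 × 𝒴)) : bound i z ≤ 1 :=
    max_le (classIndicator_le_one _ _) (classIndicator_le_one _ _)
  have gap_integrable (i : ι) : Integrable (gap i) (μ.map fun ω ↦ (Z ω, (W ω, U ω i))) :=
    .of_bound (gap_measurable i).aestronglyMeasurable 1 <|
      .of_forall fun q ↦ (gap_le i q.1 q.2).trans (mod_cast bound_le_one i q.1)
  rw [integral_const_mul, ← Real.enorm_eq_ofReal_abs, enorm_mul, Real.enorm_eq_ofReal hc,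
    lintegral_const_mul' _ _ ENNReal.ofReal_ne_top]
  simp only [← coe_max_classIndicator_sq]
  gcongr
  exact enorm_integral_sum_le_lintegral_sum_dCMI (f := gap) hZ hW
    (fun i ↦ (measurable_pi_apply i).comp_aemeasurable hU) hcoin gap_measurable gap_integrable
    (fun _ _ _ _ ↦ selGap_not _ _ _) gap_le

/-- **Theorem 2 (class-CMI bound)**: in the super-sample setting, for a bounded loss
`ℓ ∈ [0,1]`, the class-generalization error of class `y` satisfies
`|gen_y| ≤ E_{Z_{[2n]}}[(1/n^y) Σ_i sqrt (2 max(𝟙{Y_i⁻=y},𝟙{Y_i⁺=y}) I_{Z_{[2n]}}(W;U_i))]`. -/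
theorem class_CMI_bound
    {Ω 𝒲 𝒳 𝒴 : Type*}
    [mΩ : MeasurableSpace Ω] [StandardBorelSpace Ω] [Nonempty Ω]
    [MeasurableSpace 𝒲] [StandardBorelSpace 𝒲] [Nonempty 𝒲]
    [MeasurableSpace 𝒳] [StandardBorelSpace 𝒳]
    [MeasurableSpace 𝒴] [Countable 𝒴] [MeasurableSingletonClass 𝒴] [DecidableEq 𝒴]
    (μ : Measure Ω) [IsProbabilityMeasure μ]
    (n : ℕ) (hn : 0 < n)
    (PZ : Measure (𝒳 × 𝒴)) [IsProbabilityMeasure PZ]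
    (Z : Ω → Fin n → (𝒳 × 𝒴) × (𝒳 × 𝒴)) (hZ : Measurable Z)
    (U : Ω → Fin n → Bool) (hU : Measurable U)
    (W : Ω → 𝒲) (hW : Measurable W)
    -- the super-sample consists of 2n i.i.d. draws from `PZ`, independent of the
    -- i.i.d. uniform selectors `U`
    (hlaw : μ.map (fun ω => (Z ω, U ω)) =
      (Measure.pi fun _ : Fin n => PZ.prod PZ).prod (Measure.pi fun _ : Fin n => coin))
    -- `W` depends on `(Z, U)` only through the training set `S` (Markov property)
    (hSle : MeasurableSpace.comap (fun ω (i : Fin n) => trainSel (Z ω i) (U ω i))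
        inferInstance ≤ mΩ)
    (hMarkov : CondIndepFun
      (MeasurableSpace.comap (fun ω (i : Fin n) => trainSel (Z ω i) (U ω i)) inferInstance)
      hSle W (fun ω => (Z ω, U ω)) μ)
    (ℓ : 𝒲 → 𝒳 → 𝒴 → ℝ) (hℓ : Measurable fun p : 𝒲 × 𝒳 × 𝒴 => ℓ p.1 p.2.1 p.2.2)
    (hℓ01 : ∀ w x y', ℓ w x y' ∈ Set.Icc (0 : ℝ) 1)
    (y : 𝒴) (hy : 0 < PZ (Prod.snd ⁻¹' {y})) :
    ENNReal.ofReal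
        |∫ ω, (1 / ((n : ℝ) * (PZ (Prod.snd ⁻¹' {y})).toReal)) *
            ∑ i, ((if (testSel (Z ω i) (U ω i)).2 = y then
                    ℓ (W ω) (testSel (Z ω i) (U ω i)).1 (testSel (Z ω i) (U ω i)).2 else 0) -
                  (if (trainSel (Z ω i) (U ω i)).2 = y then
                    ℓ (W ω) (trainSel (Z ω i) (U ω i)).1 (trainSel (Z ω i) (U ω i)).2 else 0))
          ∂μ|
      ≤ ∫⁻ z, ENNReal.ofReal (1 / ((n : ℝ) * (PZ (Prod.snd ⁻¹' {y})).toReal)) *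
            ∑ i, (2 * max (if (z i).1.2 = y then (1 : ℝ≥0∞) else 0)
                          (if (z i).2.2 = y then (1 : ℝ≥0∞) else 0) *
                  dCMI μ W (fun ω => U ω i) Z z) ^ (1 / 2 : ℝ)
          ∂(μ.map Z) := by
  exact class_CMI_bound_general hZ.aemeasurable hU.aemeasurable hW.aemeasurable
    (map_prodMk_eval_eq_prod hZ hU hlaw) hℓ hℓ01 (measurableSet_singleton y) (by positivity)
end
end

section
/- Assume the loss has the form ℓ(w,x,y) = ℓ(f_w(x),y) with values in [0,1]. Then the super-sample class-generalization error of class y satisfies |gen_y| ≤ E_{Z_{[2n]}}[(1/n^y) Σ_{i=1}^n sqrt(2·I_{Z_{[2n]}}(Δ_yL_i;U_i))]. -/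
open MeasureTheory ProbabilityTheory
open scoped ENNReal

noncomputable section

/-!
The contribution of sample `i` is `Δᵢ sᵢ`, where `Δᵢ` takes values in `[-1, 1]` and `sᵢ` is the sign
of the selector, which is fair even conditionally on the super-sample. Given `Z = z`, the product
`Δᵢ sᵢ` need not be centred under the joint law of `(Δᵢ, Uᵢ)`, but under the product of their
conditional marginals it is, hence it is sub-Gaussian there by Hoeffding's lemma. The
Donsker–Varadhan inequality bounds the cost of exchanging the two laws by `√(2 I_z(Δᵢ; Uᵢ))`; it
remains to integrate over `z` and sum over `i`.
-/

open scoped NNReal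

section DonskerVaradhan

variable {α : Type*} [MeasurableSpace α] {ρ ν : Measure α} [IsProbabilityMeasure ρ]
  [SigmaFinite ν] {g : α → ℝ}

lemma integral_le_integral_llr_add_log_integral_exp_s6 (hac : ρ ≪ ν)
    (hllr : Integrable (llr ρ ν) ρ) (hg : Integrable g ρ)
    (hexp : Integrable (fun x => Real.exp (g x)) ν) :
    ∫ x, g x ∂ρ ≤ ∫ x, llr ρ ν x ∂ρ + Real.log (∫ x, Real.exp (g x) ∂ν) := by
  have : NeZero ν := ⟨fun h => IsProbabilityMeasure.ne_zero ρ
    (Measure.absolutelyContinuous_zero_iff.1 (h ▸ hac))⟩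
  have : IsProbabilityMeasure (ν.tilted g) := isProbabilityMeasure_tilted hexp
  -- The gap between the two sides is the divergence of `ρ` from the Gibbs measure `ν.tilted g`.
  have gibbs : 0 ≤ ∫ x, llr ρ (ν.tilted g) x ∂ρ := by
    simpa using InformationTheory.integral_llr_add_sub_measure_univ_nonneg
      (hac.trans (absolutelyContinuous_tilted hexp))
      (integrable_llr_tilted_right hac hg hllr hexp)
  rw [integral_llr_tilted_right hac hg hexp hllr] at gibbs
  linarith

lemma sq_integral_le_of_hasSubgaussianMGF_s6 {c : ℝ≥0} (hsub : HasSubgaussianMGF g c ν)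
    (hac : ρ ≪ ν) (hllr : Integrable (llr ρ ν) ρ) (hg : Integrable g ρ) :
    (∫ x, g x ∂ρ) ^ 2 ≤ 2 * c * ∫ x, llr ρ ν x ∂ρ := by
  have quadratic_nonneg (t : ℝ) :
      0 ≤ c / 2 * (t * t) + -(∫ x, g x ∂ρ) * t + ∫ x, llr ρ ν x ∂ρ := by
    have dv := integral_le_integral_llr_add_log_integral_exp_s6 hac hllr (hg.const_mul t)
      (hsub.integrable_exp_mul t)
    have hcgf : Real.log (∫ x, Real.exp (t * g x) ∂ν) ≤ c * t ^ 2 / 2 := hsub.cgf_le t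
    rw [integral_const_mul] at dv
    linarith
  have hdiscrim := discrim_le_zero quadratic_nonneg
  rw [discrim] at hdiscrim
  linarith

lemma ofReal_abs_integral_le_of_hasSubgaussianMGF {c : ℝ≥0} (hc : c ≠ 0)
    (hsub : HasSubgaussianMGF g c ν) (hg : Integrable g ρ) :
    ENNReal.ofReal |∫ x, g x ∂ρ| ≤ (2 * c * KL ρ ν) ^ (1 / 2 : ℝ) := by
  unfold KL
  split_ifs with hfin
  · have hsq := sq_integral_le_of_hasSubgaussianMGF_s6 hsub hfin.1 hfin.2 hg
    calc ENNReal.ofReal |∫ x, g x ∂ρ|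
        ≤ ENNReal.ofReal √(2 * c * ∫ x, llr ρ ν x ∂ρ) :=
          ENNReal.ofReal_le_ofReal (Real.abs_le_sqrt hsq)
      _ = (2 * c * ENNReal.ofReal (∫ x, llr ρ ν x ∂ρ)) ^ (1 / 2 : ℝ) := by
          rw [Real.sqrt_eq_rpow, ← ENNReal.ofReal_rpow_of_nonneg ((sq_nonneg _).trans hsq)
            (by norm_num), ENNReal.ofReal_mul (by positivity), ENNReal.ofReal_mul (by norm_num)]
          simp
  · simp [hc]

end DonskerVaradhan

section Disintegration

lemma integrable_comp_snd_of_integrable_map {Ω γ α E : Type*} [MeasurableSpace Ω]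
    [MeasurableSpace γ] [MeasurableSpace α] [NormedAddCommGroup E] {μ : Measure Ω} {Z : Ω → γ}
    {A : Ω → α} {g : α → E} (hZ : AEMeasurable Z μ) (hg : Integrable g (μ.map A)) :
    Integrable (fun q : γ × α => g q.2) (μ.map fun ω => (Z ω, A ω)) := by
  rw [← Measure.snd_map_prodMk₀ hZ] at hg
  exact hg.comp_measurable measurable_snd

variable {Ω γ α β : Type*} [MeasurableSpace Ω] [MeasurableSpace γ]
  [MeasurableSpace α] [StandardBorelSpace α] [Nonempty α]
  [MeasurableSpace β] [StandardBorelSpace β] [Nonempty β]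
  {μ : Measure Ω} [IsFiniteMeasure μ] {A : Ω → α} {B : Ω → β} {Z : Ω → γ}

lemma ae_ae_condDistrib_of_ae (hZ : AEMeasurable Z μ) (hA : AEMeasurable A μ) {p : α → Prop}
    (hp : MeasurableSet {a | p a}) (h : ∀ᵐ ω ∂μ, p (A ω)) :
    ∀ᵐ z ∂μ.map Z, ∀ᵐ a ∂condDistrib A Z μ z, p a := by
  refine Measure.ae_ae_of_ae_compProd (p := fun q => p q.2) ?_
  rw [compProd_map_condDistrib hA]
  exact (ae_map_iff (hZ.prodMk hA) (measurable_snd hp)).2 h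

lemma integral_integral_condDistrib {E : Type*} [NormedAddCommGroup E] [NormedSpace ℝ E]
    {g : α → E} (hZ : AEMeasurable Z μ) (hA : AEMeasurable A μ) (hg : Integrable g (μ.map A)) :
    ∫ z, ∫ a, g a ∂condDistrib A Z μ z ∂μ.map Z = ∫ ω, g (A ω) ∂μ := by
  have hjoint := integrable_comp_snd_of_integrable_map hZ hg
  have hcomp : Integrable (fun q : γ × α => g q.2) (μ.map Z ⊗ₘ condDistrib A Z μ) := by
    rwa [compProd_map_condDistrib hA]
  rw [← Measure.integral_compProd hcomp, compProd_map_condDistrib hA]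
  exact integral_map (hZ.prodMk hA) hjoint.aestronglyMeasurable

lemma ofReal_abs_integral_le_lintegral_dCMI {g : α × β → ℝ} {c : ℝ≥0}
    (hZ : AEMeasurable Z μ) (hAB : AEMeasurable (fun ω => (A ω, B ω)) μ)
    (hg : Integrable g (μ.map fun ω => (A ω, B ω))) (hc : c ≠ 0)
    (hsub : ∀ᵐ z ∂μ.map Z,
      HasSubgaussianMGF g c ((condDistrib A Z μ z).prod (condDistrib B Z μ z))) :
    ENNReal.ofReal |∫ ω, g (A ω, B ω) ∂μ| ≤
      ∫⁻ z, (2 * c * dCMI μ A B Z z) ^ (1 / 2 : ℝ) ∂μ.map Z := by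
  rw [← integral_integral_condDistrib hZ hAB hg, ← Real.norm_eq_abs, ofReal_norm]
  refine (enorm_integral_le_lintegral_enorm _).trans (lintegral_mono_ae ?_)
  filter_upwards [hsub, (integrable_comp_snd_of_integrable_map hZ hg).condDistrib_ae_map hAB]
    with z hz hgz
  rw [← ofReal_norm, Real.norm_eq_abs]
  exact ofReal_abs_integral_le_of_hasSubgaussianMGF hc hz hgz

end Disintegration

section RandomSign

instance : IsProbabilityMeasure coin :=
  ⟨by simp [coin, ENNReal.inv_two_add_inv_two]⟩

/-- The sign in `{−1, +1}` encoded by a selector bit, in the convention of `coin`. -/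
def boolSign (b : Bool) : ℝ := if b then 1 else -1

lemma measurable_boolSign : Measurable boolSign := measurable_of_finite _

lemma abs_mul_boolSign (a : ℝ) (b : Bool) : |a * boolSign b| = |a| := by
  cases b <;> simp [boolSign]

lemma integral_boolSign_coin : ∫ b, boolSign b ∂coin = 0 := by
  have hfin (b : Bool) : IsFiniteMeasure ((2 : ℝ≥0∞)⁻¹ • Measure.dirac b) := ⟨by simp⟩
  rw [coin, integral_add_measure .of_finite .of_finite, integral_smul_measure,
    integral_smul_measure]
  simp [boolSign]

lemma measurable_mul_boolSign : Measurable fun p : ℝ × Bool => p.1 * boolSign p.2 :=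
  measurable_fst.mul (measurable_boolSign.comp measurable_snd)

lemma hasSubgaussianMGF_mul_boolSign {α : Measure ℝ} [IsProbabilityMeasure α] {r : ℝ≥0}
    (hα : ∀ᵐ a : ℝ ∂α, |a| ≤ r) :
    HasSubgaussianMGF (fun p : ℝ × Bool => p.1 * boolSign p.2) (r ^ 2) (α.prod coin) := by
  have hbound : ∀ᵐ p ∂α.prod coin, p.1 * boolSign p.2 ∈ Set.Icc (-r : ℝ) r := by
    filter_upwards [Measure.quasiMeasurePreserving_fst.ae hα] with p hp
    rwa [← abs_mul_boolSign _ p.2, abs_le] at hp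
  have hmean : ∫ p : ℝ × Bool, p.1 * boolSign p.2 ∂α.prod coin = 0 := by
    rw [integral_prod_mul (fun a => a) boolSign, integral_boolSign_coin, mul_zero]
  have hparam : (‖(r : ℝ) - -r‖₊ / 2) ^ 2 = r ^ 2 := by
    rw [sub_neg_eq_add, ← two_mul]
    simp
  exact hparam ▸ hasSubgaussianMGF_of_mem_Icc_of_integral_eq_zero
    measurable_mul_boolSign.aemeasurable hbound hmean

variable {Ω γ : Type*} [MeasurableSpace Ω] [MeasurableSpace γ] {μ : Measure Ω}
  [IsFiniteMeasure μ] {A : Ω → ℝ} {U : Ω → Bool} {r : ℝ≥0}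

lemma integrable_mul_boolSign (hA : AEMeasurable A μ) (hU : AEMeasurable U μ)
    (hAr : ∀ᵐ ω ∂μ, |A ω| ≤ r) : Integrable (fun ω => A ω * boolSign (U ω)) μ := by
  refine .of_bound
    (measurable_mul_boolSign.comp_aemeasurable (hA.prodMk hU)).aestronglyMeasurable r ?_
  simpa only [Real.norm_eq_abs, abs_mul_boolSign] using hAr

lemma ofReal_abs_integral_mul_boolSign_le {Z : Ω → γ} (hA : AEMeasurable A μ)
    (hU : HasCondDistrib U Z (Kernel.const γ coin) μ) (hr : r ≠ 0) (hAr : ∀ᵐ ω ∂μ, |A ω| ≤ r) :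
    ENNReal.ofReal |∫ ω, A ω * boolSign (U ω) ∂μ| ≤
      ∫⁻ z, (2 * r ^ 2 * dCMI μ A U Z z) ^ (1 / 2 : ℝ) ∂μ.map Z := by
  have hAU : AEMeasurable (fun ω => (A ω, U ω)) μ := hA.prodMk hU.aemeasurable_snd
  have hint : Integrable (fun p : ℝ × Bool => p.1 * boolSign p.2) (μ.map fun ω => (A ω, U ω)) :=
    (integrable_map_measure measurable_mul_boolSign.aestronglyMeasurable hAU).2
      (integrable_mul_boolSign hA hU.aemeasurable_snd hAr)
  have hcoin : condDistrib U Z μ =ᵐ[μ.map Z] Kernel.const γ coin :=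
    condDistrib_ae_eq_of_measure_eq_compProd Z hU.aemeasurable_snd hU.map_eq
  have hbound : ∀ᵐ z ∂μ.map Z, ∀ᵐ a : ℝ ∂condDistrib A Z μ z, |a| ≤ r :=
    ae_ae_condDistrib_of_ae hU.aemeasurable_fst hA
      (measurableSet_le measurable_norm measurable_const) hAr
  have hsub : ∀ᵐ z ∂μ.map Z, HasSubgaussianMGF (fun p : ℝ × Bool => p.1 * boolSign p.2) (r ^ 2)
      ((condDistrib A Z μ z).prod (condDistrib U Z μ z)) := by
    filter_upwards [hcoin, hbound] with z hz hα
    rw [hz, Kernel.const_apply]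
    exact hasSubgaussianMGF_mul_boolSign hα
  simpa using ofReal_abs_integral_le_lintegral_dCMI hU.aemeasurable_fst hAU hint
    (pow_ne_zero 2 hr) hsub

end RandomSign

section SuperSample

-- Only an inequality for nonmeasurable `f`; `dCMI` is not known to be measurable in `z`.
lemma sum_lintegral_le_lintegral_sum {α ι : Type*} [MeasurableSpace α] {μ : Measure α}
    (s : Finset ι) (f : ι → α → ℝ≥0∞) :
    ∑ i ∈ s, ∫⁻ x, f i x ∂μ ≤ ∫⁻ x, ∑ i ∈ s, f i x ∂μ := by
  classical
  induction s using Finset.induction_on with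
  | empty => simp
  | insert i s hi ih =>
    simp only [Finset.sum_insert hi]
    exact (add_le_add_right ih _).trans (le_lintegral_add _ _)

lemma ofReal_abs_integral_const_mul_sum_le {α ι : Type*} [MeasurableSpace α] {μ : Measure α}
    (s : Finset ι) {k : ℝ} (hk : 0 ≤ k) {f : ι → α → ℝ} (hf : ∀ i ∈ s, Integrable (f i) μ) :
    ENNReal.ofReal |∫ x, k * ∑ i ∈ s, f i x ∂μ| ≤
      ENNReal.ofReal k * ∑ i ∈ s, ENNReal.ofReal |∫ x, f i x ∂μ| := by
  rw [integral_const_mul, integral_finsetSum s hf, abs_mul, abs_of_nonneg hk,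
    ENNReal.ofReal_mul hk, ← ENNReal.ofReal_sum_of_nonneg fun _ _ => abs_nonneg _]
  gcongr
  exact Finset.abs_sum_le_sum_abs _ _

lemma apply_testSel_sub_apply_trainSel {𝒵 : Type*} (φ : 𝒵 → ℝ) (zz : 𝒵 × 𝒵) (u : Bool) :
    φ (testSel zz u) - φ (trainSel zz u) = (φ zz.1 - φ zz.2) * boolSign u := by
  cases u <;> simp [testSel, trainSel, boolSign]

lemma hasCondDistrib_eval_of_map_eq_prod_pi {Ω γ ι : Type*} {β : ι → Type*} [MeasurableSpace Ω]
    [MeasurableSpace γ] [∀ i, MeasurableSpace (β i)] [Fintype ι] {μ : Measure Ω} [SFinite μ]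
    {P : Measure γ} {Q : ∀ i, Measure (β i)} [∀ i, IsProbabilityMeasure (Q i)] {Z : Ω → γ}
    {V : Ω → ∀ i, β i} (hZ : AEMeasurable Z μ) (hV : AEMeasurable V μ)
    (hlaw : μ.map (fun ω => (Z ω, V ω)) = P.prod (Measure.pi Q)) (i : ι) :
    HasCondDistrib (fun ω => V ω i) Z (Kernel.const γ (Q i)) μ := by
  have hmap : μ.map Z = P := by
    rw [← Measure.fst_map_prodMk₀ hV, hlaw, Measure.fst_prod]
  have hjoint : HasCondDistrib V Z (Kernel.const γ (Measure.pi Q)) μ :=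
    ⟨hZ.prodMk hV, by rw [Measure.compProd_const, hmap, hlaw]⟩
  have heval := hjoint.comp_left (measurable_pi_apply i)
  rwa [Kernel.map_const _ (measurable_pi_apply i), (measurePreserving_eval Q i).map_eq] at heval

-- `φ w (x, c)` absorbs the class indicator `𝟙{c = y} ℓ(f_w(x), c)`, and `k` stands for `1/n^y`.
theorem class_deltaL_CMI_bound_general {Ω 𝒲 𝒵 ι : Type*} [MeasurableSpace Ω]
    [MeasurableSpace 𝒲] [MeasurableSpace 𝒵] [Fintype ι] {μ : Measure Ω} [IsFiniteMeasure μ]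
    {Z : Ω → ι → 𝒵 × 𝒵} {U : Ω → ι → Bool} {W : Ω → 𝒲} (hW : AEMeasurable W μ)
    (hU : ∀ i, HasCondDistrib (fun ω => U ω i) Z (Kernel.const _ coin) μ)
    {φ : 𝒲 → 𝒵 → ℝ} (hφ : Measurable φ.uncurry) (hφ01 : ∀ w z, φ w z ∈ Set.Icc (0 : ℝ) 1)
    {k : ℝ} (hk : 0 ≤ k) :
    ENNReal.ofReal |∫ ω, k * ∑ i,
        (φ (W ω) (testSel (Z ω i) (U ω i)) - φ (W ω) (trainSel (Z ω i) (U ω i))) ∂μ|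
      ≤ ∫⁻ z, ENNReal.ofReal k * ∑ i,
          (2 * dCMI μ (fun ω => φ (W ω) (Z ω i).1 - φ (W ω) (Z ω i).2)
            (fun ω => U ω i) Z z) ^ (1 / 2 : ℝ) ∂μ.map Z := by
  let Δ (i : ι) (ω : Ω) : ℝ := φ (W ω) (Z ω i).1 - φ (W ω) (Z ω i).2
  have hΔ (i : ι) : AEMeasurable (Δ i) μ := by
    have hZi : AEMeasurable (fun ω => Z ω i) μ :=
      (measurable_pi_apply i).comp_aemeasurable (hU i).aemeasurable_fst
    exact (hφ.comp_aemeasurable (hW.prodMk hZi.fst)).sub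
      (hφ.comp_aemeasurable (hW.prodMk hZi.snd))
  have hΔ1 (i : ι) : ∀ᵐ ω ∂μ, |Δ i ω| ≤ (1 : ℝ≥0) := ae_of_all _ fun ω => by
    simpa using abs_sub_le_of_le_of_le (hφ01 _ _).1 (hφ01 _ _).2 (hφ01 _ _).1 (hφ01 _ _).2
  simp_rw [apply_testSel_sub_apply_trainSel (φ _)]
  calc ENNReal.ofReal |∫ ω, k * ∑ i, Δ i ω * boolSign (U ω i) ∂μ|
      ≤ ENNReal.ofReal k * ∑ i, ENNReal.ofReal |∫ ω, Δ i ω * boolSign (U ω i) ∂μ| :=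
        ofReal_abs_integral_const_mul_sum_le _ hk fun i _ =>
          integrable_mul_boolSign (hΔ i) (hU i).aemeasurable_snd (hΔ1 i)
    _ ≤ ENNReal.ofReal k * ∑ i, ∫⁻ z,
          (2 * dCMI μ (Δ i) (fun ω => U ω i) Z z) ^ (1 / 2 : ℝ) ∂μ.map Z := by
        gcongr with i
        simpa using ofReal_abs_integral_mul_boolSign_le (hΔ i) (hU i) one_ne_zero (hΔ1 i)
    _ ≤ ENNReal.ofReal k * ∫⁻ z, ∑ i,
          (2 * dCMI μ (Δ i) (fun ω => U ω i) Z z) ^ (1 / 2 : ℝ) ∂μ.map Z := by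
        gcongr
        exact sum_lintegral_le_lintegral_sum _ _
    _ ≤ _ := lintegral_const_mul_le _ _

end SuperSample

/-- **Theorem 4 (class-Δ_yL-CMI bound)**: in the super-sample setting with predictions
`f_w(x)` and a bounded loss `ℓ(f_w(x), y) ∈ [0,1]`, the class-generalization error of class
`y` satisfies `|gen_y| ≤ E_{Z_{[2n]}}[(1/n^y) Σ_i sqrt (2 I_{Z_{[2n]}}(Δ_yL_i;U_i))]`, where
`Δ_yL_i = 𝟙{Y_i⁻=y} ℓ(f_W(X_i⁻),Y_i⁻) − 𝟙{Y_i⁺=y} ℓ(f_W(X_i⁺),Y_i⁺)`. -/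
theorem class_deltaL_CMI_bound
    {Ω 𝒲 𝒳 𝒴 Yhat : Type*}
    [mΩ : MeasurableSpace Ω] [StandardBorelSpace Ω] [Nonempty Ω]
    [MeasurableSpace 𝒲] [StandardBorelSpace 𝒲] [Nonempty 𝒲]
    [MeasurableSpace 𝒳] [StandardBorelSpace 𝒳]
    [MeasurableSpace 𝒴] [Countable 𝒴] [MeasurableSingletonClass 𝒴] [DecidableEq 𝒴]
    [MeasurableSpace Yhat] [StandardBorelSpace Yhat] [Nonempty Yhat]
    (μ : Measure Ω) [IsProbabilityMeasure μ]
    (n : ℕ) (hn : 0 < n)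
    (PZ : Measure (𝒳 × 𝒴)) [IsProbabilityMeasure PZ]
    (Z : Ω → Fin n → (𝒳 × 𝒴) × (𝒳 × 𝒴)) (hZ : Measurable Z)
    (U : Ω → Fin n → Bool) (hU : Measurable U)
    (W : Ω → 𝒲) (hW : Measurable W)
    (hlaw : μ.map (fun ω => (Z ω, U ω)) =
      (Measure.pi fun _ : Fin n => PZ.prod PZ).prod (Measure.pi fun _ : Fin n => coin))
    (hSle : MeasurableSpace.comap (fun ω (i : Fin n) => trainSel (Z ω i) (U ω i))
        inferInstance ≤ mΩ)
    (hMarkov : CondIndepFun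
      (MeasurableSpace.comap (fun ω (i : Fin n) => trainSel (Z ω i) (U ω i)) inferInstance)
      hSle W (fun ω => (Z ω, U ω)) μ)
    -- the model prediction map and the loss on predictions
    (f : 𝒲 → 𝒳 → Yhat) (hf : Measurable fun p : 𝒲 × 𝒳 => f p.1 p.2)
    (ℓ : Yhat → 𝒴 → ℝ) (hℓ : Measurable fun p : Yhat × 𝒴 => ℓ p.1 p.2)
    (hℓ01 : ∀ p y', ℓ p y' ∈ Set.Icc (0 : ℝ) 1)
    (y : 𝒴) (hy : 0 < PZ (Prod.snd ⁻¹' {y})) :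
    ENNReal.ofReal
        |∫ ω, (1 / ((n : ℝ) * (PZ (Prod.snd ⁻¹' {y})).toReal)) *
            ∑ i, ((if (testSel (Z ω i) (U ω i)).2 = y then
                    ℓ (f (W ω) (testSel (Z ω i) (U ω i)).1) (testSel (Z ω i) (U ω i)).2 else 0) -
                  (if (trainSel (Z ω i) (U ω i)).2 = y then
                    ℓ (f (W ω) (trainSel (Z ω i) (U ω i)).1) (trainSel (Z ω i) (U ω i)).2 else 0))
          ∂μ|
      ≤ ∫⁻ z, ENNReal.ofReal (1 / ((n : ℝ) * (PZ (Prod.snd ⁻¹' {y})).toReal)) *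
            ∑ i, (2 *
                  dCMI μ
                    (fun ω =>
                      (if (Z ω i).1.2 = y then ℓ (f (W ω) ((Z ω i).1.1)) ((Z ω i).1.2) else 0) -
                        (if (Z ω i).2.2 = y then ℓ (f (W ω) ((Z ω i).2.1)) ((Z ω i).2.2) else 0))
                    (fun ω => U ω i) Z z) ^ (1 / 2 : ℝ)
          ∂(μ.map Z) :=
  class_deltaL_CMI_bound_general hW.aemeasurable
    (hasCondDistrib_eval_of_map_eq_prod_pi hZ.aemeasurable hU.aemeasurable hlaw)
    (φ := fun w z => if z.2 = y then ℓ (f w z.1) z.2 else 0)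
    (.ite (measurable_snd.snd (measurableSet_singleton y)) (by fun_prop) measurable_const)
    (fun w z => by split_ifs; exacts [hℓ01 _ _, by simp]) (by positivity)
end
end

section
/- Assume the loss has the form ℓ(w,x,y) = ℓ(f_w(x),y) with values in [0,1]. Then for P_{Z_{[2n]}}-almost every realization z of Z_{[2n]} (with labels y_i^±) and every i ∈ {1,…,n}: I_z(Δ_yL_i;U_i) ≤ max(𝟙{y_i^-=y}, 𝟙{y_i^+=y})·I_z(f_W(X_i^±);U_i) ≤ max(𝟙{y_i^-=y}, 𝟙{y_i^+=y})·I_z(W;U_i). Consequently, the class-Δ_yL-CMI bound E_{Z_{[2n]}}[(1/n^y) Σ_i sqrt(2·I_{Z_{[2n]}}(Δ_yL_i;U_i))] is at most the class-f-CMI bound E_{Z_{[2n]}}[(1/n^y) Σ_i sqrt(2·max(𝟙{Y_i^-=y},𝟙{Y_i^+=y})·I_{Z_{[2n]}}(f_W(X_i^±);U_i))], which in turn is at most the class-CMI bound E_{Z_{[2n]}}[(1/n^y) Σ_i sqrt(2·max(𝟙{Y_i^-=y},𝟙{Y_i^+=y})·I_{Z_{[2n]}}(W;U_i))]. -/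
open MeasureTheory ProbabilityTheory
open scoped ENNReal

noncomputable section

/-!
Conditionally on `Z = z`, the predictions `f_W(X_i^±)` are a function of `W`, and `Δ_yL_i` is a
function of the predictions; both functions depend on `z`, but `z` is fixed once one has
disintegrated, so each inequality is the data processing inequality for the joint law of the
processed variable and `U_i`. When neither label equals `y`, `Δ_yL_i` is constant and its
information vanishes, which is what the class weight records.
-/

lemma KL_eq_klDiv {α : Type*} [MeasurableSpace α] {μ ν : Measure α}
    (h : μ.real Set.univ = ν.real Set.univ) : KL μ ν = InformationTheory.klDiv μ ν := by
  simp [KL, InformationTheory.klDiv_def, h]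

section MutualInfo

variable {α α' β β' : Type*} [MeasurableSpace α] [MeasurableSpace α'] [MeasurableSpace β]
  [MeasurableSpace β']

/-- Mutual information of the two coordinates under the joint law `ρ`. Taking the law as argument,
rather than two random variables, lets it be applied to the values of a conditional law. -/
def mutualInfo (ρ : Measure (α × β)) : ℝ≥0∞ :=
  InformationTheory.klDiv ρ (ρ.fst.prod ρ.snd)

lemma mutualInfo_prod (μ : Measure α) (ν : Measure β) [IsProbabilityMeasure μ]
    [IsProbabilityMeasure ν] : mutualInfo (μ.prod ν) = 0 := by
  simp [mutualInfo, InformationTheory.klDiv_self]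

lemma mutualInfo_map_prodMap_le (ρ : Measure (α × β)) [IsFiniteMeasure ρ] {f : α → α'}
    {g : β → β'} (hf : Measurable f) (hg : Measurable g) :
    mutualInfo (ρ.map (Prod.map f g)) ≤ mutualInfo ρ := by
  have h_fst : (ρ.map (Prod.map f g)).fst = ρ.fst.map f := by
    simp_rw [Measure.fst, Measure.map_map measurable_fst (hf.prodMap hg),
      Measure.map_map hf measurable_fst, Prod.map_fst']
  have h_snd : (ρ.map (Prod.map f g)).snd = ρ.snd.map g := by
    simp_rw [Measure.snd, Measure.map_map measurable_snd (hf.prodMap hg),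
      Measure.map_map hg measurable_snd, Prod.map_snd']
  rw [mutualInfo, h_fst, h_snd, Measure.map_prod_map _ _ hf hg]
  exact InformationTheory.klDiv_map_le _ _ (hf.prodMap hg)

lemma mutualInfo_map_prodMap_const (ρ : Measure (α × β)) [IsProbabilityMeasure ρ] (c : α')
    {g : β → β'} (hg : Measurable g) :
    mutualInfo (ρ.map (Prod.map (fun _ ↦ c) g)) = 0 := by
  have h_law : ρ.map (Prod.map (fun _ ↦ c) g) = (Measure.dirac c).prod (ρ.snd.map g) := by
    rw [Measure.dirac_prod, Measure.snd, Measure.map_map hg measurable_snd,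
      Measure.map_map measurable_prodMk_left (hg.comp measurable_snd)]
    rfl
  have : IsProbabilityMeasure (ρ.snd.map g) := Measure.isProbabilityMeasure_map hg.aemeasurable
  rw [h_law, mutualInfo_prod]

end MutualInfo

section CondDistrib

variable {Ω γ α α' : Type*} [MeasurableSpace Ω] [MeasurableSpace γ] [MeasurableSpace α]
  [MeasurableSpace α']

lemma map_prodMk_fst_compProd (ν : Measure γ) [SFinite ν] (κ : Kernel γ α) [IsSFiniteKernel κ]
    {g : γ → α → α'} (hg : Measurable (Function.uncurry g)) :
    (ν ⊗ₘ κ).map (fun p ↦ (p.1, g p.1 p.2)) =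
      ν ⊗ₘ (Kernel.id ×ₖ κ).map (Function.uncurry g) := by
  have h_pair : Measurable fun p : γ × α ↦ (p.1, g p.1 p.2) := measurable_fst.prodMk hg
  ext s hs
  rw [Measure.map_apply h_pair hs, Measure.compProd_apply (h_pair hs), Measure.compProd_apply hs]
  refine lintegral_congr fun z ↦ ?_
  rw [Kernel.map_apply' _ hg _ (measurable_prodMk_left hs),
    Kernel.id_prod_apply' _ _ (hg (measurable_prodMk_left hs))]
  rfl

variable [StandardBorelSpace α] [Nonempty α] [StandardBorelSpace α'] [Nonempty α']
  {μ : Measure Ω} [IsFiniteMeasure μ] {V : Ω → α} {Z : Ω → γ} {g : γ → α → α'}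

lemma condDistrib_comp₂_ae_eq_map (hV : AEMeasurable V μ) (hZ : AEMeasurable Z μ)
    (hg : Measurable (Function.uncurry g)) :
    ∀ᵐ z ∂(μ.map Z),
      condDistrib (fun ω ↦ g (Z ω) (V ω)) Z μ z = (condDistrib V Z μ z).map (g z) := by
  have h_law : μ.map (fun ω ↦ (Z ω, g (Z ω) (V ω))) =
      μ.map Z ⊗ₘ (Kernel.id ×ₖ condDistrib V Z μ).map (Function.uncurry g) := by
    have h_pair : Measurable fun p : γ × α ↦ (p.1, g p.1 p.2) := measurable_fst.prodMk hg
    rw [← map_prodMk_fst_compProd _ _ hg, compProd_map_condDistrib hV,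
      AEMeasurable.map_map_of_aemeasurable h_pair.aemeasurable (hZ.prodMk hV)]
    rfl
  have h_meas : AEMeasurable (fun ω ↦ g (Z ω) (V ω)) μ := hg.comp_aemeasurable (hZ.prodMk hV)
  filter_upwards [condDistrib_ae_eq_of_measure_eq_compProd Z h_meas h_law] with z hz
  rw [hz, Kernel.map_apply _ hg, Kernel.prod_apply, Kernel.id_apply, Measure.dirac_prod,
    Measure.map_map hg measurable_prodMk_left]
  rfl

end CondDistrib

section DataProcessing

variable {Ω γ α α' β : Type*} [MeasurableSpace Ω] [MeasurableSpace γ]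
  [MeasurableSpace α] [StandardBorelSpace α] [Nonempty α]
  [MeasurableSpace α'] [StandardBorelSpace α'] [Nonempty α']
  [MeasurableSpace β] [StandardBorelSpace β] [Nonempty β]
  {μ : Measure Ω} [IsFiniteMeasure μ] {A : Ω → α} {B : Ω → β} {Z : Ω → γ}

lemma dCMI_ae_eq_mutualInfo (hA : AEMeasurable A μ) (hB : AEMeasurable B μ) :
    ∀ᵐ z ∂(μ.map Z),
      dCMI μ A B Z z = mutualInfo (condDistrib (fun ω ↦ (A ω, B ω)) Z μ z) := by
  filter_upwards [condDistrib_comp Z (hA.prodMk hB) measurable_fst,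
    condDistrib_comp Z (hA.prodMk hB) measurable_snd] with z h_fst h_snd
  rw [Kernel.map_apply _ measurable_fst] at h_fst
  rw [Kernel.map_apply _ measurable_snd] at h_snd
  rw [dCMI, KL_eq_klDiv (by simp), mutualInfo, Measure.fst, Measure.snd, ← h_fst, ← h_snd]
  rfl

variable {g : γ → α → α'}

lemma dCMI_comp_ae_eq_mutualInfo_map (hA : AEMeasurable A μ) (hB : AEMeasurable B μ)
    (hZ : AEMeasurable Z μ) (hg : Measurable (Function.uncurry g)) :
    ∀ᵐ z ∂(μ.map Z), dCMI μ (fun ω ↦ g (Z ω) (A ω)) B Z z =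
      mutualInfo ((condDistrib (fun ω ↦ (A ω, B ω)) Z μ z).map (Prod.map (g z) id)) := by
  have h_proc : Measurable (Function.uncurry fun z ↦ Prod.map (g z) (id : β → β)) :=
    (hg.comp (measurable_fst.prodMk (measurable_fst.comp measurable_snd))).prodMk
      (measurable_snd.comp measurable_snd)
  filter_upwards [dCMI_ae_eq_mutualInfo (hg.comp_aemeasurable (hZ.prodMk hA)) hB,
    condDistrib_comp₂_ae_eq_map (hA.prodMk hB) hZ h_proc] with z h_info h_law
  rw [← h_law]
  exact h_info

lemma dCMI_comp_le (hA : AEMeasurable A μ) (hB : AEMeasurable B μ) (hZ : AEMeasurable Z μ)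
    (hg : Measurable (Function.uncurry g)) :
    ∀ᵐ z ∂(μ.map Z), dCMI μ (fun ω ↦ g (Z ω) (A ω)) B Z z ≤ dCMI μ A B Z z := by
  filter_upwards [dCMI_comp_ae_eq_mutualInfo_map hA hB hZ hg, dCMI_ae_eq_mutualInfo hA hB]
    with z h_comp h_info
  rw [h_comp, h_info]
  exact mutualInfo_map_prodMap_le _ (hg.comp measurable_prodMk_left) measurable_id

lemma dCMI_comp_eq_zero_of_const (hA : AEMeasurable A μ) (hB : AEMeasurable B μ)
    (hZ : AEMeasurable Z μ) (hg : Measurable (Function.uncurry g)) :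
    ∀ᵐ z ∂(μ.map Z), ∀ c, (∀ a, g z a = c) → dCMI μ (fun ω ↦ g (Z ω) (A ω)) B Z z = 0 := by
  filter_upwards [dCMI_comp_ae_eq_mutualInfo_map hA hB hZ hg] with z h_comp c h_const
  rw [h_comp, funext h_const, mutualInfo_map_prodMap_const _ c measurable_id]

end DataProcessing

lemma lintegral_const_mul_sum_rpow_mono_ae {γ ι : Type*} [MeasurableSpace γ] [Fintype ι]
    {ν : Measure γ} {I J : γ → ι → ℝ≥0∞} (c : ℝ≥0∞) {r : ℝ} (hr : 0 ≤ r)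
    (hIJ : ∀ᵐ z ∂ν, ∀ i, I z i ≤ J z i) :
    ∫⁻ z, c * ∑ i, I z i ^ r ∂ν ≤ ∫⁻ z, c * ∑ i, J z i ^ r ∂ν := by
  refine lintegral_mono_ae ?_
  filter_upwards [hIJ] with z hz
  gcongr with i
  exact hz i

section ClassLoss

variable {𝒲 𝒳 𝒴 Yhat : Type*} [DecidableEq 𝒴]

/-- The predictions `f_w(x^±)` of the weights `w` on the two inputs of a super-sample entry. -/
def predictionPair (f : 𝒲 → 𝒳 → Yhat) (s : (𝒳 × 𝒴) × (𝒳 × 𝒴)) (w : 𝒲) : Yhat × Yhat :=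
  (f w s.1.1, f w s.2.1)

/-- The class loss difference `Δ_yL` of a super-sample entry `s`, as a function of the pair `p` of
predictions on its two inputs. -/
def classLossDiff (ℓ : Yhat → 𝒴 → ℝ) (y : 𝒴) (s : (𝒳 × 𝒴) × (𝒳 × 𝒴)) (p : Yhat × Yhat) : ℝ :=
  (if s.1.2 = y then ℓ p.1 s.1.2 else 0) - (if s.2.2 = y then ℓ p.2 s.2.2 else 0)

lemma classLossDiff_eq_zero (ℓ : Yhat → 𝒴 → ℝ) {y : 𝒴} {s : (𝒳 × 𝒴) × (𝒳 × 𝒴)}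
    (hs : ¬(s.1.2 = y ∨ s.2.2 = y)) (p : Yhat × Yhat) : classLossDiff ℓ y s p = 0 := by
  simp [classLossDiff, not_or.mp hs]

/-- The weight `max(𝟙{y⁻=y}, 𝟙{y⁺=y})` of a super-sample entry. -/
def classWeight (y : 𝒴) (s : (𝒳 × 𝒴) × (𝒳 × 𝒴)) : ℝ≥0∞ :=
  max (if s.1.2 = y then 1 else 0) (if s.2.2 = y then 1 else 0)

lemma classWeight_eq_ite (y : 𝒴) (s : (𝒳 × 𝒴) × (𝒳 × 𝒴)) :
    classWeight y s = if s.1.2 = y ∨ s.2.2 = y then 1 else 0 := by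
  by_cases h_neg : s.1.2 = y <;> by_cases h_pos : s.2.2 = y <;>
    simp [classWeight, h_neg, h_pos]

end ClassLoss

section Comparison

variable {𝒲 𝒳 𝒴 Yhat : Type*} [MeasurableSpace 𝒲] [MeasurableSpace 𝒳] [MeasurableSpace 𝒴]
  [MeasurableSpace Yhat] {f : 𝒲 → 𝒳 → Yhat} {ℓ : Yhat → 𝒴 → ℝ}

lemma measurable_predictionPair (hf : Measurable fun p : 𝒲 × 𝒳 ↦ f p.1 p.2) :
    Measurable fun q : ((𝒳 × 𝒴) × (𝒳 × 𝒴)) × 𝒲 ↦ predictionPair f q.1 q.2 :=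
  (hf.comp (measurable_snd.prodMk measurable_fst.fst.fst)).prodMk
    (hf.comp (measurable_snd.prodMk measurable_fst.snd.fst))

lemma measurable_classLossDiff [MeasurableSingletonClass 𝒴] [DecidableEq 𝒴]
    (hℓ : Measurable fun p : Yhat × 𝒴 ↦ ℓ p.1 p.2) (y : 𝒴) :
    Measurable fun q : ((𝒳 × 𝒴) × (𝒳 × 𝒴)) × (Yhat × Yhat) ↦ classLossDiff ℓ y q.1 q.2 := by
  refine .sub (.ite ?_ ?_ measurable_const) (.ite ?_ ?_ measurable_const)
  · exact measurable_fst.fst.snd (measurableSet_singleton y)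
  · exact hℓ.comp (measurable_snd.fst.prodMk measurable_fst.fst.snd)
  · exact measurable_fst.snd.snd (measurableSet_singleton y)
  · exact hℓ.comp (measurable_snd.snd.prodMk measurable_fst.snd.snd)

variable {Ω γ β : Type*} [MeasurableSpace Ω] [MeasurableSpace γ]
  [MeasurableSpace β] [StandardBorelSpace β] [Nonempty β]
  [StandardBorelSpace Yhat] [Nonempty Yhat]
  {μ : Measure Ω} [IsFiniteMeasure μ] {B : Ω → β} {Z : Ω → γ} {s : γ → (𝒳 × 𝒴) × (𝒳 × 𝒴)}

lemma dCMI_classLossDiff_le [MeasurableSingletonClass 𝒴] [DecidableEq 𝒴] {P : Ω → Yhat × Yhat}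
    (hP : AEMeasurable P μ) (hB : AEMeasurable B μ) (hZ : AEMeasurable Z μ) (hs : Measurable s)
    (hℓ : Measurable fun p : Yhat × 𝒴 ↦ ℓ p.1 p.2) (y : 𝒴) :
    ∀ᵐ z ∂(μ.map Z), dCMI μ (fun ω ↦ classLossDiff ℓ y (s (Z ω)) (P ω)) B Z z ≤
      classWeight y (s z) * dCMI μ P B Z z := by
  have h_loss : Measurable (Function.uncurry fun z p ↦ classLossDiff ℓ y (s z) p) :=
    (measurable_classLossDiff hℓ y).comp (hs.prodMap measurable_id)
  filter_upwards [dCMI_comp_le hP hB hZ h_loss, dCMI_comp_eq_zero_of_const hP hB hZ h_loss]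
    with z h_le h_zero
  rw [classWeight_eq_ite]
  split_ifs with h_label
  · rwa [one_mul]
  · rw [zero_mul, h_zero 0 (classLossDiff_eq_zero ℓ h_label)]

lemma dCMI_predictionPair_le [StandardBorelSpace 𝒲] [Nonempty 𝒲] {W : Ω → 𝒲}
    (hW : AEMeasurable W μ) (hB : AEMeasurable B μ) (hZ : AEMeasurable Z μ) (hs : Measurable s)
    (hf : Measurable fun p : 𝒲 × 𝒳 ↦ f p.1 p.2) :
    ∀ᵐ z ∂(μ.map Z),
      dCMI μ (fun ω ↦ predictionPair f (s (Z ω)) (W ω)) B Z z ≤ dCMI μ W B Z z :=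
  have h_pred : Measurable (Function.uncurry fun z w ↦ predictionPair f (s z) w) :=
    (measurable_predictionPair hf).comp (hs.prodMap measurable_id)
  dCMI_comp_le hW hB hZ h_pred

end Comparison

theorem deltaL_CMI_tighter_than_fCMI_tighter_than_CMI_general
    {Ω ι 𝒲 𝒳 𝒴 β Yhat : Type*} [MeasurableSpace Ω] [Fintype ι]
    [MeasurableSpace 𝒲] [StandardBorelSpace 𝒲] [Nonempty 𝒲]
    [MeasurableSpace 𝒳]
    [MeasurableSpace 𝒴] [MeasurableSingletonClass 𝒴] [DecidableEq 𝒴]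
    [MeasurableSpace β] [StandardBorelSpace β] [Nonempty β]
    [MeasurableSpace Yhat] [StandardBorelSpace Yhat] [Nonempty Yhat]
    {μ : Measure Ω} [IsFiniteMeasure μ]
    {Z : Ω → ι → (𝒳 × 𝒴) × (𝒳 × 𝒴)} (hZ : AEMeasurable Z μ)
    {U : Ω → ι → β} (hU : AEMeasurable U μ)
    {W : Ω → 𝒲} (hW : AEMeasurable W μ)
    {f : 𝒲 → 𝒳 → Yhat} (hf : Measurable fun p : 𝒲 × 𝒳 ↦ f p.1 p.2)
    {ℓ : Yhat → 𝒴 → ℝ} (hℓ : Measurable fun p : Yhat × 𝒴 ↦ ℓ p.1 p.2)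
    (y : 𝒴) (c : ℝ≥0∞) :
    (∀ᵐ z ∂(μ.map Z), ∀ i,
      dCMI μ (fun ω ↦ classLossDiff ℓ y (Z ω i) (predictionPair f (Z ω i) (W ω)))
          (fun ω ↦ U ω i) Z z
        ≤ classWeight y (z i) *
            dCMI μ (fun ω ↦ predictionPair f (Z ω i) (W ω)) (fun ω ↦ U ω i) Z z
      ∧ classWeight y (z i) *
            dCMI μ (fun ω ↦ predictionPair f (Z ω i) (W ω)) (fun ω ↦ U ω i) Z z
        ≤ classWeight y (z i) * dCMI μ W (fun ω ↦ U ω i) Z z) ∧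
    (∫⁻ z, c * ∑ i, (2 *
          dCMI μ (fun ω ↦ classLossDiff ℓ y (Z ω i) (predictionPair f (Z ω i) (W ω)))
            (fun ω ↦ U ω i) Z z) ^ (1 / 2 : ℝ) ∂(μ.map Z)
      ≤ ∫⁻ z, c * ∑ i, (2 * classWeight y (z i) *
          dCMI μ (fun ω ↦ predictionPair f (Z ω i) (W ω))
            (fun ω ↦ U ω i) Z z) ^ (1 / 2 : ℝ) ∂(μ.map Z)) ∧
    (∫⁻ z, c * ∑ i, (2 * classWeight y (z i) *
          dCMI μ (fun ω ↦ predictionPair f (Z ω i) (W ω))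
            (fun ω ↦ U ω i) Z z) ^ (1 / 2 : ℝ) ∂(μ.map Z)
      ≤ ∫⁻ z, c * ∑ i, (2 * classWeight y (z i) *
          dCMI μ W (fun ω ↦ U ω i) Z z) ^ (1 / 2 : ℝ) ∂(μ.map Z)) := by
  have hZi (i : ι) := (measurable_pi_apply i).comp_aemeasurable hZ
  have hUi (i : ι) := (measurable_pi_apply i).comp_aemeasurable hU
  have h_pred (i : ι) : AEMeasurable (fun ω ↦ predictionPair f (Z ω i) (W ω)) μ :=
    (measurable_predictionPair hf).comp_aemeasurable ((hZi i).prodMk hW)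
  have h_loss_le_pred := ae_all_iff.2 fun i ↦
    dCMI_classLossDiff_le (h_pred i) (hUi i) hZ (measurable_pi_apply i) hℓ y
  have h_pred_le_weights := ae_all_iff.2 fun i ↦
    dCMI_predictionPair_le hW (hUi i) hZ (measurable_pi_apply i) hf
  refine ⟨?_, lintegral_const_mul_sum_rpow_mono_ae c (by positivity) ?_,
    lintegral_const_mul_sum_rpow_mono_ae c (by positivity) ?_⟩
  · filter_upwards [h_loss_le_pred, h_pred_le_weights] with z h_loss h_weights i
    exact ⟨h_loss i, by gcongr; exact h_weights i⟩
  · filter_upwards [h_loss_le_pred] with z h_loss i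
    rw [mul_assoc]
    gcongr
    exact h_loss i
  · filter_upwards [h_pred_le_weights] with z h_weights i
    gcongr
    exact h_weights i

/-- **Theorem 4, comparison part**: almost surely over the super-sample and for every `i`,
`I_z(Δ_yL_i;U_i) ≤ max(𝟙{y_i⁻=y},𝟙{y_i⁺=y}) I_z(f_W(X_i^±);U_i)
  ≤ max(𝟙{y_i⁻=y},𝟙{y_i⁺=y}) I_z(W;U_i)`;
consequently the class-Δ_yL-CMI bound is at most the class-f-CMI bound, which is at most the
class-CMI bound. -/
theorem deltaL_CMI_tighter_than_fCMI_tighter_than_CMI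
    {Ω 𝒲 𝒳 𝒴 Yhat : Type*}
    [mΩ : MeasurableSpace Ω] [StandardBorelSpace Ω] [Nonempty Ω]
    [MeasurableSpace 𝒲] [StandardBorelSpace 𝒲] [Nonempty 𝒲]
    [MeasurableSpace 𝒳] [StandardBorelSpace 𝒳]
    [MeasurableSpace 𝒴] [Countable 𝒴] [MeasurableSingletonClass 𝒴] [DecidableEq 𝒴]
    [MeasurableSpace Yhat] [StandardBorelSpace Yhat] [Nonempty Yhat]
    (μ : Measure Ω) [IsProbabilityMeasure μ]
    (n : ℕ) (hn : 0 < n)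
    (PZ : Measure (𝒳 × 𝒴)) [IsProbabilityMeasure PZ]
    (Z : Ω → Fin n → (𝒳 × 𝒴) × (𝒳 × 𝒴)) (hZ : Measurable Z)
    (U : Ω → Fin n → Bool) (hU : Measurable U)
    (W : Ω → 𝒲) (hW : Measurable W)
    (hlaw : μ.map (fun ω => (Z ω, U ω)) =
      (Measure.pi fun _ : Fin n => PZ.prod PZ).prod (Measure.pi fun _ : Fin n => coin))
    (hSle : MeasurableSpace.comap (fun ω (i : Fin n) => trainSel (Z ω i) (U ω i))
        inferInstance ≤ mΩ)
    (hMarkov : CondIndepFun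
      (MeasurableSpace.comap (fun ω (i : Fin n) => trainSel (Z ω i) (U ω i)) inferInstance)
      hSle W (fun ω => (Z ω, U ω)) μ)
    (f : 𝒲 → 𝒳 → Yhat) (hf : Measurable fun p : 𝒲 × 𝒳 => f p.1 p.2)
    (ℓ : Yhat → 𝒴 → ℝ) (hℓ : Measurable fun p : Yhat × 𝒴 => ℓ p.1 p.2)
    (hℓ01 : ∀ p y', ℓ p y' ∈ Set.Icc (0 : ℝ) 1)
    (y : 𝒴) (hy : 0 < PZ (Prod.snd ⁻¹' {y})) :
    (∀ᵐ z ∂(μ.map Z), ∀ i : Fin n,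
      dCMI μ
          (fun ω =>
            (if (Z ω i).1.2 = y then ℓ (f (W ω) ((Z ω i).1.1)) ((Z ω i).1.2) else 0) -
              (if (Z ω i).2.2 = y then ℓ (f (W ω) ((Z ω i).2.1)) ((Z ω i).2.2) else 0))
          (fun ω => U ω i) Z z
        ≤ max (if (z i).1.2 = y then (1 : ℝ≥0∞) else 0)
              (if (z i).2.2 = y then (1 : ℝ≥0∞) else 0) *
            dCMI μ (fun ω => (f (W ω) ((Z ω i).1.1), f (W ω) ((Z ω i).2.1)))
              (fun ω => U ω i) Z z
      ∧ max (if (z i).1.2 = y then (1 : ℝ≥0∞) else 0)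
              (if (z i).2.2 = y then (1 : ℝ≥0∞) else 0) *
            dCMI μ (fun ω => (f (W ω) ((Z ω i).1.1), f (W ω) ((Z ω i).2.1)))
              (fun ω => U ω i) Z z
        ≤ max (if (z i).1.2 = y then (1 : ℝ≥0∞) else 0)
              (if (z i).2.2 = y then (1 : ℝ≥0∞) else 0) *
            dCMI μ W (fun ω => U ω i) Z z) ∧
    (∫⁻ z, ENNReal.ofReal (1 / ((n : ℝ) * (PZ (Prod.snd ⁻¹' {y})).toReal)) *
          ∑ i, (2 *
                dCMI μ
                  (fun ω =>
                    (if (Z ω i).1.2 = y then ℓ (f (W ω) ((Z ω i).1.1)) ((Z ω i).1.2) else 0) -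
                      (if (Z ω i).2.2 = y then ℓ (f (W ω) ((Z ω i).2.1)) ((Z ω i).2.2) else 0))
                  (fun ω => U ω i) Z z) ^ (1 / 2 : ℝ)
        ∂(μ.map Z)
      ≤ ∫⁻ z, ENNReal.ofReal (1 / ((n : ℝ) * (PZ (Prod.snd ⁻¹' {y})).toReal)) *
          ∑ i, (2 * max (if (z i).1.2 = y then (1 : ℝ≥0∞) else 0)
                        (if (z i).2.2 = y then (1 : ℝ≥0∞) else 0) *
                dCMI μ (fun ω => (f (W ω) ((Z ω i).1.1), f (W ω) ((Z ω i).2.1)))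
                  (fun ω => U ω i) Z z) ^ (1 / 2 : ℝ)
        ∂(μ.map Z)) ∧
    (∫⁻ z, ENNReal.ofReal (1 / ((n : ℝ) * (PZ (Prod.snd ⁻¹' {y})).toReal)) *
          ∑ i, (2 * max (if (z i).1.2 = y then (1 : ℝ≥0∞) else 0)
                        (if (z i).2.2 = y then (1 : ℝ≥0∞) else 0) *
                dCMI μ (fun ω => (f (W ω) ((Z ω i).1.1), f (W ω) ((Z ω i).2.1)))
                  (fun ω => U ω i) Z z) ^ (1 / 2 : ℝ)
        ∂(μ.map Z)
      ≤ ∫⁻ z, ENNReal.ofReal (1 / ((n : ℝ) * (PZ (Prod.snd ⁻¹' {y})).toReal)) *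
          ∑ i, (2 * max (if (z i).1.2 = y then (1 : ℝ≥0∞) else 0)
                        (if (z i).2.2 = y then (1 : ℝ≥0∞) else 0) *
                dCMI μ W (fun ω => U ω i) Z z) ^ (1 / 2 : ℝ)
        ∂(μ.map Z)) := by
  exact deltaL_CMI_tighter_than_fCMI_tighter_than_CMI_general hZ.aemeasurable hU.aemeasurable
    hW.aemeasurable hf hℓ y _
end
end
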